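/- arXiv:1710.11234 — 2 statements merged into one kernel-verified Lean document; each statement's English description precedes it below -/
import Mathlib

section
/- Let n ≥ 1 and let u, v ∈ ℝ^{2n} be vectors with ω(u, v) > 0. Then there exists γ ∈ Sp(2n, ℤ) such that ω_j(γu, γv) ≠ 0 for every j = 1, …, n. -/
def idx1 (n : ℕ) (j : Fin n) : Fin (2 * n) :=
  ⟨2 * j.val, by have := j.isLt; omega⟩

def idx2 (n : ℕ) (j : Fin n) : Fin (2 * n) :=
  ⟨2 * j.val + 1, by have := j.isLt; omega⟩

def omegaJ {R : Type*} [CommRing R] (n : ℕ) (j : Fin n) (u v : Fin (2 * n) → R) : R :=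
  u (idx1 n j) * v (idx2 n j) - u (idx2 n j) * v (idx1 n j)

def omegaForm {R : Type*} [CommRing R] (n : ℕ) (u v : Fin (2 * n) → R) : R :=
  ∑ j : Fin n, omegaJ n j u v

def IsSymplectic {R : Type*} [CommRing R] (n : ℕ)
    (g : Matrix (Fin (2 * n)) (Fin (2 * n)) R) : Prop :=
  ∀ x y : Fin (2 * n) → R, omegaForm n (g.mulVec x) (g.mulVec y) = omegaForm n x y

/-- the covector part of the transvection -/
def tvMat (n : ℕ) (t : ℤ) (z : Fin (2 * n) → ℤ) : Matrix (Fin (2 * n)) (Fin (2 * n)) ℤ :=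
  Matrix.of fun r s => (if r = s then 1 else 0) + t * omegaForm n (Pi.single s 1) z * z r

abbrev zc {n : ℕ} (z : Fin (2 * n) → ℤ) : Fin (2 * n) → ℝ := fun m => (z m : ℝ)

abbrev rm {n : ℕ} (g : Matrix (Fin (2 * n)) (Fin (2 * n)) ℤ) :
    Matrix (Fin (2 * n)) (Fin (2 * n)) ℝ := g.map (Int.cast : ℤ → ℝ)

lemma omegaJ_shift (n : ℕ) (j : Fin n) (x y z : Fin (2 * n) → ℝ) (a b : ℝ) :
    omegaJ n j (x + a • z) (y + b • z)
      = omegaJ n j x y + b * omegaJ n j x z - a * omegaJ n j y z := by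
  simp only [omegaJ, Pi.add_apply, Pi.smul_apply, smul_eq_mul]; ring

lemma omegaForm_shift (n : ℕ) (x y z : Fin (2 * n) → ℝ) (a b : ℝ) :
    omegaForm n (x + a • z) (y + b • z)
      = omegaForm n x y + b * omegaForm n x z - a * omegaForm n y z := by
  simp only [omegaForm, omegaJ_shift, Finset.sum_add_distrib, Finset.sum_sub_distrib,
    Finset.mul_sum]

def omegaLin (n : ℕ) (z : Fin (2 * n) → ℝ) : (Fin (2 * n) → ℝ) →ₗ[ℝ] ℝ where
  toFun w := omegaForm n w z
  map_add' x y := by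
    simp only [omegaForm, omegaJ, ← Finset.sum_add_distrib, Pi.add_apply]
    exact Finset.sum_congr rfl fun _ _ => by ring
  map_smul' a x := by
    simp only [omegaForm, omegaJ, Finset.mul_sum, Pi.smul_apply, smul_eq_mul, RingHom.id_apply]
    exact Finset.sum_congr rfl fun _ _ => by ring

lemma omegaForm_expand (n : ℕ) (z : Fin (2 * n) → ℤ) (w : Fin (2 * n) → ℝ) :
    omegaForm n w (zc z) = ∑ s, w s * ((omegaForm n (Pi.single s 1) z : ℤ) : ℝ) := by
  have h := LinearMap.pi_apply_eq_sum_univ (omegaLin n (zc z)) w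
  change omegaForm n w (zc z) = _ at h
  rw [h]
  refine Finset.sum_congr rfl fun s _ => ?_
  rw [smul_eq_mul]
  congr 1
  simp only [omegaLin, LinearMap.coe_mk, AddHom.coe_mk, omegaForm, omegaJ, Pi.single_apply]
  push_cast
  refine Finset.sum_congr rfl fun j _ => ?_
  simp [eq_comm]

lemma tv_act (n : ℕ) (t : ℤ) (z : Fin (2 * n) → ℤ) (w : Fin (2 * n) → ℝ) :
    (rm (tvMat n t z)).mulVec w = w + ((t : ℝ) * omegaForm n w (zc z)) • zc z := by
  ext r
  simp only [Matrix.mulVec, dotProduct, rm, Matrix.map_apply, tvMat, Matrix.of_apply,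
    Pi.add_apply, Pi.smul_apply, smul_eq_mul, omegaForm_expand]
  push_cast
  simp only [add_mul, Finset.sum_add_distrib, ite_mul, one_mul, zero_mul, Finset.sum_ite_eq,
    Finset.mem_univ, if_true, Finset.mul_sum, Finset.sum_mul]
  congr 1
  exact Finset.sum_congr rfl fun _ _ => by ring

lemma tv_symp (n : ℕ) (t : ℤ) (z : Fin (2 * n) → ℤ) : IsSymplectic n (rm (tvMat n t z)) := by
  intro x y
  rw [tv_act, tv_act, omegaForm_shift]; ring

/-- vector supported on the blocks `i` and `k` -/
def zvec (n : ℕ) (i k : Fin n) (a1 a2 b1 b2 : ℤ) : Fin (2 * n) → ℤ := fun m =>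
  if m = idx1 n i then a1 else if m = idx2 n i then a2 else
  if m = idx1 n k then b1 else if m = idx2 n k then b2 else 0

lemma idx11 (n : ℕ) (i j : Fin n) : idx1 n i = idx1 n j ↔ i = j := by
  simp [idx1, Fin.ext_iff]
lemma idx22 (n : ℕ) (i j : Fin n) : idx2 n i = idx2 n j ↔ i = j := by
  simp [idx2, Fin.ext_iff]
lemma idx12 (n : ℕ) (i j : Fin n) : idx1 n i ≠ idx2 n j := by
  simp only [idx1, idx2, ne_eq, Fin.ext_iff]; omega
lemma idx21 (n : ℕ) (i j : Fin n) : idx2 n i ≠ idx1 n j := by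
  simp only [idx1, idx2, ne_eq, Fin.ext_iff]; omega

lemma omegaJ_zi (n : ℕ) (i k : Fin n) (a1 a2 b1 b2 : ℤ) (w : Fin (2 * n) → ℝ) :
    omegaJ n i w (zc (zvec n i k a1 a2 b1 b2)) = w (idx1 n i) * a2 - w (idx2 n i) * a1 := by
  simp [omegaJ, zc, zvec, idx21]

lemma omegaJ_zk (n : ℕ) (i k : Fin n) (h : i ≠ k) (a1 a2 b1 b2 : ℤ) (w : Fin (2 * n) → ℝ) :
    omegaJ n k w (zc (zvec n i k a1 a2 b1 b2)) = w (idx1 n k) * b2 - w (idx2 n k) * b1 := by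
  simp [omegaJ, zc, zvec, idx21, idx12, idx11, idx22, h.symm]

lemma omegaJ_zj (n : ℕ) (i k j : Fin n) (hi : j ≠ i) (hk : j ≠ k) (a1 a2 b1 b2 : ℤ)
    (w : Fin (2 * n) → ℝ) :
    omegaJ n j w (zc (zvec n i k a1 a2 b1 b2)) = 0 := by
  simp [omegaJ, zc, zvec, idx21, idx12, idx11, idx22, hi, hk]

lemma omegaForm_z (n : ℕ) (i k : Fin n) (h : i ≠ k) (a1 a2 b1 b2 : ℤ) (w : Fin (2 * n) → ℝ) :
    omegaForm n w (zc (zvec n i k a1 a2 b1 b2))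
      = (w (idx1 n i) * a2 - w (idx2 n i) * a1) + (w (idx1 n k) * b2 - w (idx2 n k) * b1) := by
  rw [← omegaJ_zi n i k a1 a2 b1 b2, ← omegaJ_zk n i k h a1 a2 b1 b2, omegaForm]
  exact Finset.sum_eq_add i k h
    (fun j _ hj => omegaJ_zj n i k j hj.1 hj.2 _ _ _ _ _) (by simp) (by simp)

def StepGoal (n : ℕ) (i k : Fin n) (u v : Fin (2 * n) → ℝ) : Prop :=
  ∃ g : Matrix (Fin (2 * n)) (Fin (2 * n)) ℤ, IsSymplectic n (rm g) ∧
    omegaJ n i ((rm g).mulVec u) ((rm g).mulVec v) ≠ 0 ∧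
    omegaJ n k ((rm g).mulVec u) ((rm g).mulVec v) ≠ 0 ∧
    ∀ j, j ≠ i → j ≠ k →
      omegaJ n j ((rm g).mulVec u) ((rm g).mulVec v) = omegaJ n j u v

lemma step_of_D (n : ℕ) (i k : Fin n) (h : i ≠ k) (u v : Fin (2 * n) → ℝ)
    (hi : omegaJ n i u v ≠ 0) (hk : omegaJ n k u v = 0) (a1 a2 b1 b2 : ℤ)
    (hD : (v (idx1 n i) * a2 - v (idx2 n i) * a1) * (u (idx1 n k) * b2 - u (idx2 n k) * b1)
      - (u (idx1 n i) * a2 - u (idx2 n i) * a1) * (v (idx1 n k) * b2 - v (idx2 n k) * b1) ≠ 0) :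
    StepGoal n i k u v := by
  set D := (v (idx1 n i) * a2 - v (idx2 n i) * a1) * (u (idx1 n k) * b2 - u (idx2 n k) * b1)
      - (u (idx1 n i) * a2 - u (idx2 n i) * a1) * (v (idx1 n k) * b2 - v (idx2 n k) * b1) with hDdef
  obtain ⟨t, ht0, ht⟩ : ∃ t : ℤ, (t : ℝ) ≠ 0 ∧ omegaJ n i u v - t * D ≠ 0 := by
    by_cases hc : omegaJ n i u v = D
    · refine ⟨2, by norm_num, ?_⟩
      rw [hc]; intro h0; apply hD; push_cast at h0; linarith
    · refine ⟨1, by norm_num, ?_⟩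
      push_cast; rw [one_mul]; exact sub_ne_zero.mpr hc
  refine ⟨tvMat n t (zvec n i k a1 a2 b1 b2), tv_symp _ _ _, ?_, ?_, ?_⟩
  · rw [tv_act, tv_act, omegaJ_shift, omegaForm_z _ _ _ h, omegaForm_z _ _ _ h, omegaJ_zi, omegaJ_zi]
    convert ht using 1
    rw [hDdef]; ring
  · rw [tv_act, tv_act, omegaJ_shift, omegaForm_z _ _ _ h, omegaForm_z _ _ _ h,
      omegaJ_zk _ _ _ h, omegaJ_zk _ _ _ h, hk]
    convert mul_ne_zero ht0 hD using 1
    rw [hDdef]; ring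
  · intro j hji hjk
    rw [tv_act, tv_act, omegaJ_shift, omegaJ_zj _ _ _ _ hji hjk, omegaJ_zj _ _ _ _ hji hjk]
    ring

lemma step_nondeg (n : ℕ) (i k : Fin n) (h : i ≠ k) (u v : Fin (2 * n) → ℝ)
    (hi : omegaJ n i u v ≠ 0) (hk : omegaJ n k u v = 0)
    (hn : ¬ (u (idx1 n k) = 0 ∧ u (idx2 n k) = 0 ∧ v (idx1 n k) = 0 ∧ v (idx2 n k) = 0)) :
    StepGoal n i k u v := by
  by_contra hcon
  have key := fun a1 a2 b1 b2 => not_not.mp (mt (step_of_D n i k h u v hi hk a1 a2 b1 b2) hcon)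
  have e1 := key 0 1 0 1
  have e2 := key 0 1 1 0
  have e3 := key 1 0 0 1
  have e4 := key 1 0 1 0
  push_cast at e1 e2 e3 e4
  apply hn
  refine ⟨?_, ?_, ?_, ?_⟩ <;> refine (mul_eq_zero.mp ?_).resolve_right hi <;> unfold omegaJ
  · linear_combination (-u (idx1 n i)) * e3 - u (idx2 n i) * e1
  · linear_combination (u (idx1 n i)) * e4 + u (idx2 n i) * e2
  · linear_combination (-v (idx1 n i)) * e3 - v (idx2 n i) * e1
  · linear_combination (v (idx1 n i)) * e4 + v (idx2 n i) * e2

lemma symp_mul (n : ℕ) (g g' : Matrix (Fin (2 * n)) (Fin (2 * n)) ℤ)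
    (hg : IsSymplectic n (rm g)) (hg' : IsSymplectic n (rm g')) :
    IsSymplectic n (rm (g * g')) := by
  intro x y
  rw [rm, Matrix.map_mul_intCast, ← Matrix.mulVec_mulVec, ← Matrix.mulVec_mulVec, hg, hg']

lemma mul_act (n : ℕ) (g g' : Matrix (Fin (2 * n)) (Fin (2 * n)) ℤ) (w : Fin (2 * n) → ℝ) :
    (rm (g * g')).mulVec w = (rm g).mulVec ((rm g').mulVec w) := by
  rw [rm, Matrix.map_mul_intCast, ← Matrix.mulVec_mulVec]

lemma step_all (n : ℕ) (i k : Fin n) (h : i ≠ k) (u v : Fin (2 * n) → ℝ)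
    (hi : omegaJ n i u v ≠ 0) (hk : omegaJ n k u v = 0) : StepGoal n i k u v := by
  by_cases hn : (u (idx1 n k) = 0 ∧ u (idx2 n k) = 0 ∧ v (idx1 n k) = 0 ∧ v (idx2 n k) = 0)
  swap
  · exact step_nondeg n i k h u v hi hk hn
  obtain ⟨h1, h2, h3, h4⟩ := hn
  let T := tvMat n 1 (zvec n i k 1 0 1 0)
  have A : ∀ w : Fin (2 * n) → ℝ, w (idx1 n k) = 0 → w (idx2 n k) = 0 →
      (rm T).mulVec w (idx1 n k) = - w (idx2 n i) := by
    intro w hw1 hw2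
    rw [tv_act, omegaForm_z _ _ _ h]
    simp [zc, zvec, hw1, hw2, idx11, idx12, h.symm]
  have B : ∀ j, omegaJ n j ((rm T).mulVec u) ((rm T).mulVec v) = omegaJ n j u v := by
    intro j
    rw [tv_act, tv_act, omegaJ_shift, omegaForm_z _ _ _ h, omegaForm_z _ _ _ h]
    by_cases hji : j = i
    · subst hji
      rw [omegaJ_zi, omegaJ_zi, h1, h2, h3, h4]; ring
    by_cases hjk : j = k
    · subst hjk
      rw [omegaJ_zk _ _ _ h, omegaJ_zk _ _ _ h, h1, h2, h3, h4]; ring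
    rw [omegaJ_zj _ _ _ _ hji hjk, omegaJ_zj _ _ _ _ hji hjk]; ring
  obtain ⟨g, hg, hgi, hgk, hgj⟩ := step_nondeg n i k h ((rm T).mulVec u) ((rm T).mulVec v)
    (by rwa [B]) (by rwa [B]) (by
      rintro ⟨c1, -, c3, -⟩
      rw [A u h1 h2] at c1
      rw [A v h3 h4] at c3
      apply hi
      rw [omegaJ, neg_eq_zero.mp c1, neg_eq_zero.mp c3]; ring)
  refine ⟨g * T, symp_mul n g T hg (tv_symp _ _ _), ?_⟩
  rw [mul_act, mul_act]
  exact ⟨hgi, hgk, fun j a b => by rw [hgj j a b, B]⟩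

lemma main_ind (n : ℕ) (N : ℕ) : ∀ u v : Fin (2 * n) → ℝ, omegaForm n u v ≠ 0 →
    (Finset.univ.filter fun j => omegaJ n j u v = 0).card ≤ N →
    ∃ g : Matrix (Fin (2 * n)) (Fin (2 * n)) ℤ, IsSymplectic n (rm g) ∧
      ∀ j, omegaJ n j ((rm g).mulVec u) ((rm g).mulVec v) ≠ 0 := by
  induction N with
  | zero =>
    intro u v _ hc
    refine ⟨1, ?_, ?_⟩
    · intro x y; simp [rm]
    · intro j hj
      rw [Nat.le_zero, Finset.card_eq_zero] at hc
      have : j ∈ (Finset.univ.filter fun j => omegaJ n j u v = 0) := by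
        simpa [rm] using hj
      rw [hc] at this
      simp at this
  | succ N ih =>
    intro u v h hc
    by_cases hz : ∃ k, omegaJ n k u v = 0
    · obtain ⟨k, hk⟩ := hz
      obtain ⟨i, -, hi⟩ := Finset.exists_ne_zero_of_sum_ne_zero h
      have hik : i ≠ k := by rintro rfl; exact hi hk
      obtain ⟨g, hg, hgi, hgk, hgj⟩ := step_all n i k hik u v hi hk
      obtain ⟨g', hg', hall⟩ := ih ((rm g).mulVec u) ((rm g).mulVec v) (by rwa [hg]) (by
        apply Nat.le_of_lt_succ
        refine lt_of_lt_of_le (Finset.card_lt_card ?_) hc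
        rw [Finset.ssubset_iff_of_subset]
        · exact ⟨k, by simpa using hk, by simpa using hgk⟩
        · intro j hj
          simp only [Finset.mem_filter, Finset.mem_univ, true_and] at hj ⊢
          by_cases a : j = i
          · subst a; exact absurd hj hgi
          by_cases b : j = k
          · subst b; exact hk
          rwa [hgj j a b] at hj)
      refine ⟨g' * g, symp_mul n g' g hg' hg, fun j => ?_⟩
      rw [mul_act, mul_act]
      exact hall j
    · push Not at hz
      refine ⟨1, ?_, ?_⟩
      · intro x y; simp [rm]
      · intro j; simpa [rm] using hz j


/-- For `u, v ∈ ℝ^{2n}` with `ω(u,v) > 0` there is `γ ∈ Sp(2n, ℤ)` with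
`ω_j(γu, γv) ≠ 0` for every `j = 1, …, n`. -/
theorem exists_integer_symplectic_all_blocks_nonzero (n : ℕ) (hn : 1 ≤ n)
    (u v : Fin (2 * n) → ℝ) (huv : 0 < omegaForm n u v) :
    ∃ γ : Matrix (Fin (2 * n)) (Fin (2 * n)) ℤ,
      IsSymplectic n (γ.map (Int.cast : ℤ → ℝ)) ∧
      ∀ j : Fin n,
        omegaJ n j ((γ.map (Int.cast : ℤ → ℝ)).mulVec u)
          ((γ.map (Int.cast : ℤ → ℝ)).mulVec v) ≠ 0 := by
  exact main_ind n _ u v huv.ne' le_rfl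
end

section
/- Let n ≥ 2, let u, v ∈ ℝ^{2n} with ω(u, v) = 1, set V = Span(u, v), and let U' = {g ∈ Sp(2n, ℝ) : g u = u and g v = v} be the pointwise stabilizer of u and v. If L ⊂ ℝ^{2n} is a one-dimensional linear subspace with g L = L for every g ∈ U', then L ⊆ V. -/
theorem om_add_left (n : ℕ) (a b c : Fin (2 * n) → ℝ) :
    omegaForm n (a + b) c = omegaForm n a c + omegaForm n b c := by
  simp only [omegaForm, omegaJ, Pi.add_apply, ← Finset.sum_add_distrib]
  exact Finset.sum_congr rfl fun _ _ => by ring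

theorem om_smul_left (n : ℕ) (r : ℝ) (a c : Fin (2 * n) → ℝ) :
    omegaForm n (r • a) c = r * omegaForm n a c := by
  simp only [omegaForm, omegaJ, Pi.smul_apply, smul_eq_mul, Finset.mul_sum]
  exact Finset.sum_congr rfl fun _ _ => by ring

theorem om_skew (n : ℕ) (a c : Fin (2 * n) → ℝ) :
    omegaForm n a c = - omegaForm n c a := by
  simp only [omegaForm, omegaJ, ← Finset.sum_neg_distrib]
  exact Finset.sum_congr rfl fun _ _ => by ring

theorem om_self (n : ℕ) (a : Fin (2 * n) → ℝ) : omegaForm n a a = 0 := by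
  have := om_skew n a a
  linarith

theorem om_add_right (n : ℕ) (a b c : Fin (2 * n) → ℝ) :
    omegaForm n c (a + b) = omegaForm n c a + omegaForm n c b := by
  rw [om_skew, om_add_left, om_skew n c a, om_skew n c b]; ring

theorem om_smul_right (n : ℕ) (r : ℝ) (a c : Fin (2 * n) → ℝ) :
    omegaForm n c (r • a) = r * omegaForm n c a := by
  rw [om_skew, om_smul_left, om_skew n c a]; ring

theorem om_nondeg (n : ℕ) (q : Fin (2 * n) → ℝ) (h : ∀ y, omegaForm n y q = 0) : q = 0 := by
  have key1 : ∀ j, q (idx2 n j) = 0 := by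
    intro j
    have := h (Pi.single (idx1 n j) 1)
    simp only [omegaForm, omegaJ] at this
    rw [Finset.sum_eq_single j] at this
    · simpa [Pi.single_apply, idx1, idx2] using this
    · intro b _ hb
      have h1 : ¬ (b : ℕ) = j := fun e => hb (Fin.ext e)
      have h2 : ¬ (2 * (b : ℕ) + 1 = 2 * j) := by omega
      simp [Pi.single_apply, idx1, idx2, h1, h2]
    · simp
  have key2 : ∀ j, q (idx1 n j) = 0 := by
    intro j
    have := h (Pi.single (idx2 n j) 1)
    simp only [omegaForm, omegaJ] at this
    rw [Finset.sum_eq_single j] at this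
    · simpa [Pi.single_apply, idx1, idx2] using this
    · intro b _ hb
      have h1 : ¬ (b : ℕ) = j := fun e => hb (Fin.ext e)
      have h2 : ¬ (2 * (b : ℕ) = 2 * j + 1) := by omega
      simp [Pi.single_apply, idx1, idx2, h1, h2]
    · simp
  funext i
  have hi := i.isLt
  rcases Nat.even_or_odd' i.val with ⟨k, hk | hk⟩
  · have e : i = idx1 n ⟨k, by omega⟩ := Fin.ext hk
    rw [e]; exact key2 _
  · have e : i = idx2 n ⟨k, by omega⟩ := Fin.ext hk
    rw [e]; exact key1 _

/-- The transvection `y ↦ y + ω(w, y) w`. -/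
noncomputable def transv (n : ℕ) (w : Fin (2 * n) → ℝ) :
    (Fin (2 * n) → ℝ) →ₗ[ℝ] (Fin (2 * n) → ℝ) where
  toFun y := y + omegaForm n w y • w
  map_add' a b := by rw [om_add_right, add_smul]; abel
  map_smul' r a := by rw [om_smul_right, mul_smul]; simp

theorem invariant_line_in_span (n : ℕ) (hn : 2 ≤ n)
    (u v : Fin (2 * n) → ℝ) (huv : omegaForm n u v = 1)
    (L : Submodule ℝ (Fin (2 * n) → ℝ)) (hL : Module.finrank ℝ L = 1)
    (hinv : ∀ g : Matrix (Fin (2 * n)) (Fin (2 * n)) ℝ,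
      IsSymplectic n g → g.mulVec u = u → g.mulVec v = v →
        L.map (Matrix.mulVecLin g) = L) :
    L ≤ Submodule.span ℝ ({u, v} : Set (Fin (2 * n) → ℝ)) := by
  intro x hx
  have hvu : omegaForm n v u = -1 := by rw [om_skew, huv]
  -- any two vectors of a line are ω-orthogonal
  have horth : ∀ a ∈ L, ∀ b ∈ L, omegaForm n a b = 0 := by
    obtain ⟨z, _, hz⟩ := finrank_eq_one_iff'.1 hL
    intro a ha b hb
    obtain ⟨c, hc⟩ := hz ⟨a, ha⟩
    obtain ⟨d, hd⟩ := hz ⟨b, hb⟩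
    have hc' : c • (z : Fin (2 * n) → ℝ) = a := congrArg Subtype.val hc
    have hd' : d • (z : Fin (2 * n) → ℝ) = b := congrArg Subtype.val hd
    rw [← hc', ← hd', om_smul_left, om_smul_right, om_self]; ring
  have hW : ∀ w, omegaForm n w u = 0 → omegaForm n w v = 0 → omegaForm n w x = 0 := by
    intro w hu hv
    have hg : ∀ y, (LinearMap.toMatrix' (transv n w)).mulVec y = y + omegaForm n w y • w := by
      intro y
      rw [LinearMap.toMatrix'_mulVec]; rfl
    have hmap := hinv (LinearMap.toMatrix' (transv n w))
      (by
        intro a b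
        rw [hg, hg]
        simp only [om_add_left, om_add_right, om_smul_left, om_smul_right, om_self]
        rw [om_skew n a w]; ring)
      (by rw [hg, hu]; simp) (by rw [hg, hv]; simp)
    have hmem : x + omegaForm n w x • w ∈ L := by
      rw [← hmap, ← hg]
      exact Submodule.mem_map_of_mem (f := Matrix.mulVecLin _) hx
    have h0 := horth _ hmem x hx
    rw [om_add_left, om_smul_left, om_self, zero_add] at h0
    exact mul_self_eq_zero.1 h0
  have hq : x + ((-omegaForm n x v) • u + omegaForm n x u • v) = 0 := by
    apply om_nondeg n
    intro y
    have := hW (y + ((-omegaForm n y v) • u + omegaForm n y u • v))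
      (by simp only [om_add_left, om_smul_left, om_self, hvu]; ring)
      (by simp only [om_add_left, om_smul_left, om_self, huv]; ring)
    simp only [om_add_left, om_smul_left] at this
    simp only [om_add_right, om_smul_right]
    rw [om_skew n x v, om_skew n x u]
    linarith
  rw [Submodule.mem_span_pair]
  refine ⟨omegaForm n x v, -omegaForm n x u, ?_⟩
  rw [← sub_eq_zero, ← neg_eq_zero, ← hq]
  module
end
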